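/- arXiv:1106.5190 — 4 statements merged into one kernel-verified Lean document; each statement's English description precedes it below -/
import Mathlib

section
/- Let k be a field of characteristic p > 0, n ≥ 1, and R a subalgebra of the polynomial ring k[X] = k[x₁,…,xₙ]. If J(R) = k[X] (i.e. the Jacobian ideal is the whole ring), then R[X^p] = k[X]. -/
open MvPolynomial

/-- The Jacobian of an `n`-tuple of polynomials in `n` variables. -/
noncomputable def jac {k : Type*} [CommRing k] {n : ℕ}
    (F : Fin n → MvPolynomial (Fin n) k) : MvPolynomial (Fin n) k :=
  (Matrix.of fun i j : Fin n => pderiv j (F i)).det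

/-- The Jacobian ideal of a subalgebra `R` of `k[X]`: the ideal generated by all
Jacobians of `n`-tuples of elements of `R`. -/
noncomputable def jacIdeal {k : Type*} [CommRing k] {n : ℕ}
    (R : Subalgebra k (MvPolynomial (Fin n) k)) : Ideal (MvPolynomial (Fin n) k) :=
  Ideal.span {g | ∃ F : Fin n → MvPolynomial (Fin n) k, (∀ i, F i ∈ R) ∧ g = jac F}

/-- `R[X^p]`: the subalgebra of `k[X]` generated by `R` together with `x₁^p, …, xₙ^p`. -/
noncomputable def RXp {k : Type*} [CommRing k] {n : ℕ} (p : ℕ)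
    (R : Subalgebra k (MvPolynomial (Fin n) k)) : Subalgebra k (MvPolynomial (Fin n) k) :=
  Algebra.adjoin k ((R : Set (MvPolynomial (Fin n) k)) ∪
    Set.range fun i : Fin n => (X i : MvPolynomial (Fin n) k) ^ p)

open scoped TensorProduct

lemma aux_pow_mem {k : Type*} [Field k] (p : ℕ) (hp : p.Prime) [CharP k p]
    (n : ℕ) (R : Subalgebra k (MvPolynomial (Fin n) k)) (a : MvPolynomial (Fin n) k) :
    a ^ p ∈ RXp p R := by
  have : Fact p.Prime := ⟨hp⟩
  induction a using MvPolynomial.induction_on with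
  | C a =>
    rw [← map_pow]
    exact (RXp p R).algebraMap_mem (a ^ p)
  | add f g hf hg =>
    rw [add_pow_char]
    exact add_mem hf hg
  | mul_X f i hf =>
    rw [mul_pow]
    exact mul_mem hf (Algebra.subset_adjoin (Or.inr ⟨i, rfl⟩))

lemma aux_sum {k : Type*} [Field k] {n : ℕ} {M : Type*} [AddCommGroup M] [Module k M]
    [Module (MvPolynomial (Fin n) k) M]
    (D : Fin n → Derivation k (MvPolynomial (Fin n) k) M) (f : MvPolynomial (Fin n) k) :
    (∑ j, D j) f = ∑ j, D j f := by
  have := congrFun (map_sum (Derivation.coeFnAddMonoidHom (R := k)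
    (A := MvPolynomial (Fin n) k) (M := M)) D Finset.univ) f
  rw [Finset.sum_apply] at this
  exact this

lemma aux_der {k : Type*} [Field k] {n : ℕ} {M : Type*} [AddCommGroup M] [Module k M]
    [Module (MvPolynomial (Fin n) k) M] [IsScalarTower k (MvPolynomial (Fin n) k) M]
    (D : Derivation k (MvPolynomial (Fin n) k) M) (f : MvPolynomial (Fin n) k) :
    D f = ∑ j, pderiv j f • D (X j) := by
  classical
  have h : D = ∑ j, ((LinearMap.toSpanSingleton (MvPolynomial (Fin n) k) M
      (D (X j))).compDer (pderiv (R := k) j)) := by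
    apply MvPolynomial.derivation_ext
    intro i
    simp [aux_sum, pderiv_X, Pi.single_apply]
  conv_lhs => rw [h]
  simp [aux_sum]

lemma aux_der_zero {k : Type*} [Field k] {n : ℕ} {M : Type*} [AddCommGroup M] [Module k M]
    [Module (MvPolynomial (Fin n) k) M] [IsScalarTower k (MvPolynomial (Fin n) k) M]
    (D : Derivation k (MvPolynomial (Fin n) k) M)
    (R : Subalgebra k (MvPolynomial (Fin n) k))
    (htop : jacIdeal R = ⊤) (hD : ∀ f ∈ R, D f = 0) (f : MvPolynomial (Fin n) k) : D f = 0 := by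
  classical
  have hX : ∀ i, D (X i) = 0 := by
    intro i
    have hle : jacIdeal R ≤ LinearMap.ker
        (LinearMap.toSpanSingleton (MvPolynomial (Fin n) k) M (D (X i))) := by
      refine Ideal.span_le.2 ?_
      rintro g ⟨F, hF, rfl⟩
      simp only [SetLike.mem_coe, LinearMap.mem_ker, LinearMap.toSpanSingleton_apply]
      set A : Matrix (Fin n) (Fin n) (MvPolynomial (Fin n) k) :=
        Matrix.of fun i j : Fin n => pderiv j (F i) with hA
      have h1 : ∀ l, ∑ j, A l j • D (X j) = 0 := fun l => by
        have := hD _ (hF l)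
        rw [aux_der D] at this
        exact this
      have h2 : ∀ j, (A.adjugate * A) i j = if i = j then A.det else 0 := by
        intro j
        rw [Matrix.adjugate_mul]
        simp [Matrix.one_apply]
      calc jac F • D (X i) = ∑ j, (A.adjugate * A) i j • D (X j) := by
            have hj : jac F = A.det := rfl
            simp [h2, ite_smul, hj]
        _ = ∑ l, A.adjugate i l • ∑ j, A l j • D (X j) := by
            simp only [Matrix.mul_apply, Finset.sum_smul, Finset.smul_sum, mul_smul]
            exact Finset.sum_comm
        _ = 0 := by simp [h1]
    have : (1 : MvPolynomial (Fin n) k) ∈ jacIdeal R := by rw [htop]; trivial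
    simpa using hle this
  rw [aux_der D]
  simp [hX]

lemma aux_epi {k B A : Type*} [Field k] [CommRing B] [CommRing A] [Algebra k B] [Algebra k A]
    [Algebra B A] [IsScalarTower k B A] (p : ℕ) (hp : p.Prime) [CharP k p]
    [Algebra.FiniteType k A] (hpow : ∀ a : A, ∃ b : B, algebraMap B A b = a ^ p)
    (hD : ∀ a, KaehlerDifferential.D B A a = 0) : Function.Surjective (algebraMap B A) := by
  have : Fact p.Prime := ⟨hp⟩
  have : Algebra.FiniteType B A := Algebra.FiniteType.of_restrictScalars_finiteType k B A
  have : Algebra.IsIntegral B A := ⟨fun a => by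
    obtain ⟨b, hb⟩ := hpow a
    exact IsIntegral.of_pow hp.pos (hb ▸ isIntegral_algebraMap)⟩
  have : Module.Finite B A := Algebra.IsIntegral.finite
  rw [← Algebra.isEpi_iff_surjective_algebraMap_of_finite,
    Algebra.isEpi_iff_forall_one_tmul_eq]
  have hsub : Subsingleton (Ω[A⁄B]) := by
    rw [← Submodule.subsingleton_iff A, ← subsingleton_iff_bot_eq_top,
      ← KaehlerDifferential.span_range_derivation, eq_comm, Submodule.span_eq_bot]
    rintro _ ⟨a, rfl⟩
    exact hD a
  have hid : IsIdempotentElem (KaehlerDifferential.ideal B A) :=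
    (Ideal.cotangent_subsingleton_iff _).mp hsub
  obtain ⟨e, he, hI⟩ := (Ideal.isIdempotentElem_iff_of_fg _
    (KaehlerDifferential.ideal_fg B A)).mp hid
  have hnil : KaehlerDifferential.ideal B A ≤ nilradical (A ⊗[B] A) := by
    rw [← KaehlerDifferential.span_range_eq_ideal, Ideal.span_le]
    rintro _ ⟨a, rfl⟩
    rcases subsingleton_or_nontrivial (A ⊗[B] A) with h | h
    · exact ⟨1, Subsingleton.elim _ _⟩
    have : CharP (A ⊗[B] A) p :=
      charP_of_injective_algebraMap (algebraMap k (A ⊗[B] A)).injective p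
    refine ⟨p, ?_⟩
    change _ = (0 : A ⊗[B] A)
    obtain ⟨b, hb⟩ := hpow a
    simp only [sub_pow_char, Algebra.TensorProduct.tmul_pow, one_pow, ← hb]
    rw [Algebra.algebraMap_eq_smul_one, TensorProduct.smul_tmul, sub_self]
  have he0 : e = 0 := by
    obtain ⟨m, hm⟩ := hnil (hI ▸ Ideal.mem_span_singleton_self e : e ∈ KaehlerDifferential.ideal B A)
    have := he.pow_succ_eq m
    rw [pow_succ, hm, zero_mul] at this
    exact this.symm
  intro a
  have := KaehlerDifferential.one_smul_sub_smul_one_mem_ideal B a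
  rw [hI, he0] at this
  simpa [sub_eq_zero] using this

theorem stmt1 {k : Type*} [Field k] (p : ℕ) (hp : p.Prime) [CharP k p]
    (n : ℕ) (hn : 1 ≤ n) (R : Subalgebra k (MvPolynomial (Fin n) k))
    (htop : jacIdeal R = ⊤) :
    RXp p R = ⊤ := by
  have hs : Function.Surjective (algebraMap (RXp p R) (MvPolynomial (Fin n) k)) := by
    refine aux_epi (k := k) p hp (fun a => ⟨⟨a ^ p, aux_pow_mem p hp n R a⟩, rfl⟩) ?_
    intro a
    refine aux_der_zero ((KaehlerDifferential.D (RXp p R) (MvPolynomial (Fin n) k)).restrictScalars k)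
      R htop ?_ a
    intro f hf
    exact (KaehlerDifferential.D (RXp p R) (MvPolynomial (Fin n) k)).map_algebraMap
      ⟨f, Algebra.subset_adjoin (Or.inl hf)⟩
  rw [eq_top_iff]
  rintro f -
  obtain ⟨b, rfl⟩ := hs f
  exact b.2
end

section
/- Let k be a field of characteristic p > 0 and A an n × n matrix over k. If F = AX, i.e. Fᵢ = Σⱼ A_{ij} xⱼ for 1 ≤ i ≤ n, then Δ(F) = (det A)^q, where q = p^n(p−1)/2. -/
open MvPolynomial

/-- `U` is a matrix of coefficients for the linear map with matrix `A`. -/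
def IsU {k : Type*} [Field k] (p n : ℕ) (A : Matrix (Fin n) (Fin n) k)
    (U : Matrix (Fin n → Fin p) (Fin n → Fin p) (MvPolynomial (Fin n) k)) : Prop :=
  (∀ α β, U α β ∈
      Algebra.adjoin k (Set.range fun i : Fin n => (X i : MvPolynomial (Fin n) k) ^ p)) ∧
  (∀ α : Fin n → Fin p,
      ∏ i : Fin n, (∑ j : Fin n, C (A i j) * X j : MvPolynomial (Fin n) k) ^ (α i : ℕ)
        = ∑ β : Fin n → Fin p, U α β * ∏ i : Fin n, X i ^ (β i : ℕ))

lemma mem_adjoin_iff_expand {k : Type*} [Field k] (p n : ℕ) (f : MvPolynomial (Fin n) k)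
    (hf : f ∈ Algebra.adjoin k (Set.range fun i : Fin n => (X i : MvPolynomial (Fin n) k) ^ p)) :
    ∃ g, expand p g = f := by
  rw [Algebra.adjoin_range_eq_range_aeval] at hf
  obtain ⟨g, hg⟩ := hf
  refine ⟨g, ?_⟩
  rw [← hg]
  rfl

lemma coeff_term {k : Type*} [Field k] (p n : ℕ) (hp : p ≠ 0) (g : MvPolynomial (Fin n) k)
    (β γ : Fin n → Fin p) (d : Fin n →₀ ℕ) :
    coeff (p • d + Finsupp.equivFunOnFinite.symm (fun i => (γ i : ℕ)))
      (expand p g * ∏ i : Fin n, X i ^ (β i : ℕ)) = if β = γ then coeff d g else 0 := by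
  have hm : (∏ i : Fin n, X i ^ (β i : ℕ) : MvPolynomial (Fin n) k)
      = monomial (Finsupp.equivFunOnFinite.symm (fun i => (β i : ℕ))) 1 := by
    rw [monomial_eq, Finsupp.prod_fintype _ _ (by simp)]
    simp
  rw [hm]
  split_ifs with h
  · subst h
    rw [coeff_mul_monomial, coeff_expand_smul p hp, mul_one]
  · rw [coeff_mul_monomial']
    split_ifs with h2
    · obtain ⟨i, hi⟩ := Function.ne_iff.mp h
      rw [coeff_expand_of_not_dvd (i := i), zero_mul]
      intro hd
      have h3 := h2 i
      simp at hd h3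
      apply hi
      have h4 : (β i : ℕ) ≡ p * d i + γ i [MOD p] := (Nat.modEq_iff_dvd' h3).2 hd
      have h5 : (β i : ℕ) % p = (p * d i + γ i) % p := h4
      rw [Nat.mul_add_mod, Nat.mod_eq_of_lt (β i).2, Nat.mod_eq_of_lt (γ i).2] at h5
      exact Fin.ext h5
    · rfl

lemma IsU.unique {k : Type*} [Field k] {p n : ℕ} (hp : p ≠ 0) {A : Matrix (Fin n) (Fin n) k}
    {U V : Matrix (Fin n → Fin p) (Fin n → Fin p) (MvPolynomial (Fin n) k)}
    (hU : IsU p n A U) (hV : IsU p n A V) : U = V := by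
  choose u hu using fun α β => mem_adjoin_iff_expand p n _ (hU.1 α β)
  choose v hv using fun α β => mem_adjoin_iff_expand p n _ (hV.1 α β)
  ext1 α γ
  rw [← hu, ← hv]
  congr 1
  ext d
  have h := (hU.2 α).symm.trans (hV.2 α)
  simp only [← hu, ← hv] at h
  have h2 := congrArg
    (coeff (p • d + Finsupp.equivFunOnFinite.symm (fun i => (γ i : ℕ)))) h
  simpa [coeff_sum, coeff_term p n hp] using h2

lemma IsU.mul {k : Type*} [Field k] {p n : ℕ} (hp : p.Prime) [CharP k p]
    {A B : Matrix (Fin n) (Fin n) k}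
    {U V : Matrix (Fin n → Fin p) (Fin n → Fin p) (MvPolynomial (Fin n) k)}
    (hU : IsU p n A U) (hV : IsU p n B V) :
    IsU p n (A * B)
      (U.map (aeval fun i : Fin n => (∑ j, C (B i j) * X j : MvPolynomial (Fin n) k)) * V) := by
  set φ := aeval (R := k) fun i : Fin n => (∑ j, C (B i j) * X j : MvPolynomial (Fin n) k) with hφ
  have : Fact p.Prime := ⟨hp⟩
  have hφmem : ∀ f ∈ Algebra.adjoin k
      (Set.range fun i : Fin n => (X i : MvPolynomial (Fin n) k) ^ p),
      φ f ∈ Algebra.adjoin k (Set.range fun i : Fin n => (X i : MvPolynomial (Fin n) k) ^ p) := by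
    intro f hf
    suffices h : Algebra.adjoin k (Set.range fun i : Fin n => (X i : MvPolynomial (Fin n) k) ^ p)
      ≤ (Algebra.adjoin k
          (Set.range fun i : Fin n => (X i : MvPolynomial (Fin n) k) ^ p)).comap φ from h hf
    rw [Algebra.adjoin_le_iff]
    rintro _ ⟨i, rfl⟩
    simp only [SetLike.mem_coe, Subalgebra.mem_comap, map_pow, hφ, aeval_X]
    rw [sum_pow_char]
    refine Subalgebra.sum_mem _ fun j _ => ?_
    rw [mul_pow]
    refine Subalgebra.mul_mem _ ?_ (Algebra.subset_adjoin ⟨j, rfl⟩)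
    rw [← map_pow]
    exact Subalgebra.algebraMap_mem _ _
  refine ⟨fun α β => ?_, fun α => ?_⟩
  · rw [Matrix.mul_apply]
    exact Subalgebra.sum_mem _ fun γ _ => Subalgebra.mul_mem _ (hφmem _ (hU.1 _ _)) (hV.1 _ _)
  · have h := congrArg φ (hU.2 α)
    simp only [map_prod, map_pow, map_sum, map_mul] at h
    have hC : ∀ a, φ (C a) = C a := fun a => by simp [hφ, algebraMap_eq]
    have hX : ∀ i, φ (X i) = ∑ j, C (B i j) * X j := fun i => by simp [hφ]
    simp only [hC, hX, hV.2] at h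
    convert h using 1
    · refine Finset.prod_congr rfl fun i _ => ?_
      congr 1
      simp only [Matrix.mul_apply, map_sum, map_mul, Finset.sum_mul, Finset.mul_sum]
      rw [Finset.sum_comm]
      simp only [mul_assoc]
    · simp only [Matrix.mul_apply, Matrix.map_apply, Finset.sum_mul, Finset.mul_sum]
      rw [Finset.sum_comm]
      simp only [mul_assoc]

lemma sum_exponents (p n : ℕ) (i : Fin n) :
    ∑ α : Fin n → Fin p, (α i : ℕ) = p ^ n * (p - 1) / 2 := by
  have h : ∑ α : Fin n → Fin p, (α i : ℕ) = ∑ α : Fin n → Fin p, ((α i).rev : ℕ) := by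
    have hinv : Function.Involutive (fun (α : Fin n → Fin p) l => (α l).rev) := by
      intro α; ext l; simp
    exact (Equiv.sum_comp hinv.toPerm (fun α : Fin n → Fin p => (α i : ℕ))).symm
  have h2 : ∑ α : Fin n → Fin p, (α i : ℕ) + ∑ α : Fin n → Fin p, ((α i).rev : ℕ)
      = p ^ n * (p - 1) := by
    rw [← Finset.sum_add_distrib]
    rw [Finset.sum_congr rfl (g := fun _ => p - 1)]
    · simp
    · intro α _
      have := (α i).2
      simp only [Fin.val_rev]
      omega
  omega

lemma isU_diagonal {k : Type*} [Field k] (p n : ℕ) (D : Fin n → k) :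
    IsU p n (Matrix.diagonal D) (Matrix.diagonal fun α => C (∏ i, D i ^ (α i : ℕ))) := by
  refine ⟨fun α β => ?_, fun α => ?_⟩
  · rw [Matrix.diagonal_apply]
    split_ifs
    · exact Subalgebra.algebraMap_mem _ _
    · exact Subalgebra.zero_mem _
  · simp [Matrix.diagonal_apply, Finset.prod_mul_distrib, mul_pow, apply_ite C, ite_mul]

lemma det_diagonal {k : Type*} [Field k] (p n : ℕ) (D : Fin n → k) :
    (Matrix.diagonal fun α : Fin n → Fin p =>
      (C (∏ i, D i ^ (α i : ℕ)) : MvPolynomial (Fin n) k)).det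
      = C (Matrix.diagonal D).det ^ (p ^ n * (p - 1) / 2) := by
  rw [Matrix.det_diagonal, Matrix.det_diagonal, ← map_prod, Finset.prod_comm, ← map_pow,
    ← Finset.prod_pow]
  congr 1
  refine Finset.prod_congr rfl fun i _ => ?_
  rw [Finset.prod_pow_eq_pow_sum, sum_exponents]

lemma exists_transvection {k : Type*} [Field k] (p n : ℕ) (hp : 0 < p) (i j : Fin n) (hij : i ≠ j)
    (c : k) : ∃ U : Matrix (Fin n → Fin p) (Fin n → Fin p) (MvPolynomial (Fin n) k),
      IsU p n (Matrix.transvection i j c) U ∧ U.det = 1 := by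
  classical
  let g : (Fin n → Fin p) → Fin p → (Fin n → Fin p) := fun α m =>
    Function.update (Function.update α i m) j ⟨((α j : ℕ) + (α i - m)) % p, Nat.mod_lt _ hp⟩
  let co : (Fin n → Fin p) → Fin p → MvPolynomial (Fin n) k := fun α m =>
    C (c ^ ((α i : ℕ) - m) * ((α i : ℕ).choose m : k)) *
      (X j ^ p) ^ (((α j : ℕ) + (α i - m)) / p)
  have hgi : ∀ α m, g α m i = m := fun α m => by simp [g, hij]
  have hgself : ∀ α, g α (α i) = α := fun α => by
    ext l
    by_cases hl : l = j
    · subst hl; simp [g, Nat.mod_eq_of_lt]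
    · by_cases hl' : l = i
      · subst hl'; simp [g, hl]
      · simp [g, hl, hl']
  have hcoself : ∀ α, co α (α i) = 1 := fun α => by
    simp [co, Nat.div_eq_of_lt]
  have hco0 : ∀ α m, α i < m → co α m = 0 := fun α m h => by
    simp [co, Nat.choose_eq_zero_of_lt (show (α i : ℕ) < m from h)]
  refine ⟨fun α β => ∑ m, if β = g α m then co α m else 0, ⟨fun α β => ?_, fun α => ?_⟩, ?_⟩
  · refine Subalgebra.sum_mem _ fun m _ => ?_
    split_ifs
    · exact Subalgebra.mul_mem _ (Subalgebra.algebraMap_mem _ _)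
        (Subalgebra.pow_mem _ (Algebra.subset_adjoin (Set.mem_range_self j)) _)
    · exact Subalgebra.zero_mem _
  · have hR : ∑ β : Fin n → Fin p, (∑ m, if β = g α m then co α m else 0) *
        ∏ i : Fin n, (X i : MvPolynomial (Fin n) k) ^ (β i : ℕ)
        = ∑ m, co α m * ∏ l : Fin n, X l ^ (g α m l : ℕ) := by
      simp only [Finset.sum_mul]
      rw [Finset.sum_comm]
      refine Finset.sum_congr rfl fun m _ => ?_
      simp
    rw [hR]
    have hFi : (∑ l : Fin n, C (Matrix.transvection i j c i l) * X l : MvPolynomial (Fin n) k)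
        = X i + C c * X j := by
      simp [Matrix.transvection, Matrix.add_apply, Matrix.one_apply, Matrix.single_apply,
        add_mul, Finset.sum_add_distrib, apply_ite C, ite_mul]
    have hFl : ∀ l, l ≠ i →
        (∑ t : Fin n, C (Matrix.transvection i j c l t) * X t : MvPolynomial (Fin n) k)
        = X l := by
      intro l hl
      simp [Matrix.transvection, Matrix.add_apply, Matrix.one_apply, Matrix.single_apply,
        add_mul, Finset.sum_add_distrib, apply_ite C, ite_mul, Ne.symm hl]
    have hj : j ∈ Finset.univ.erase i := by simp [Ne.symm hij]
    rw [← Finset.mul_prod_erase _ _ (Finset.mem_univ i), hFi,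
      Finset.prod_congr rfl (g := fun l => (X l : MvPolynomial (Fin n) k) ^ (α l : ℕ))
        (fun l hl => by rw [hFl l (Finset.ne_of_mem_erase hl)]),
      ← Finset.mul_prod_erase _ _ hj]
    have hbin : (X i + C c * X j : MvPolynomial (Fin n) k) ^ (α i : ℕ)
        = ∑ m : Fin p, X i ^ (m : ℕ) * (C c * X j) ^ ((α i : ℕ) - m) *
            ((α i : ℕ).choose m : MvPolynomial (Fin n) k) := by
      rw [add_pow, Fin.sum_univ_eq_sum_range (fun m => (X i : MvPolynomial (Fin n) k) ^ m *
        (C c * X j) ^ ((α i : ℕ) - m) * ((α i : ℕ).choose m : MvPolynomial (Fin n) k)) p]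
      refine Finset.sum_subset ?_ ?_
      · intro m hm
        have := (α i).2
        simp at hm ⊢
        omega
      · intro m _ hm
        simp at hm
        rw [Nat.choose_eq_zero_of_lt (by omega)]
        simp
    rw [hbin, Finset.sum_mul]
    refine Finset.sum_congr rfl fun m _ => ?_
    rw [← Finset.mul_prod_erase _ (fun l => (X l : MvPolynomial (Fin n) k) ^ (g α m l : ℕ))
      (Finset.mem_univ i), ← Finset.mul_prod_erase _ _ hj, hgi]
    rw [Finset.prod_congr rfl (s₁ := (Finset.univ.erase i).erase j)
      (f := fun l => (X l : MvPolynomial (Fin n) k) ^ (g α m l : ℕ))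
      (g := fun l => (X l : MvPolynomial (Fin n) k) ^ (α l : ℕ))]
    · have hgj : (g α m j : ℕ) = ((α j : ℕ) + (α i - m)) % p := by simp [g]
      have hpw : (X j : MvPolynomial (Fin n) k) ^ (α j : ℕ) * X j ^ ((α i : ℕ) - m)
          = (X j ^ p) ^ (((α j : ℕ) + (α i - m)) / p) * X j ^ (g α m j : ℕ) := by
        rw [hgj, ← pow_add, ← pow_mul, ← pow_add, Nat.div_add_mod]
      simp only [co, map_mul, map_pow, map_natCast, mul_pow]
      linear_combination (X i ^ (m : ℕ) * C c ^ ((α i : ℕ) - m) *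
        ((α i : ℕ).choose m : MvPolynomial (Fin n) k) *
        ∏ l ∈ (Finset.univ.erase i).erase j, X l ^ (α l : ℕ)) * hpw
    · intro l hl
      simp only [Finset.mem_erase] at hl
      simp [g, hl.1, hl.2.1]
  · have hdiag : ∀ α β : Fin n → Fin p, α i ≤ β i →
        (∑ m, if β = g α m then co α m else 0) = if α = β then 1 else 0 := by
      intro α β hab
      rw [Finset.sum_eq_single (β i)]
      · rcases hab.eq_or_lt with h | h
        · rw [← h, hgself, hcoself]
          simp [eq_comm]
        · rw [hco0 _ _ h, if_neg (fun e : α = β => by simp [e] at h)]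
          simp
      · intro m _ hm
        rw [if_neg]
        intro e
        exact hm (by rw [e, hgi])
      · simp
    have hbt : Matrix.BlockTriangular (fun α β : Fin n → Fin p =>
        ∑ m, if β = g α m then co α m else 0) (fun α => OrderDual.toDual (α i)) := by
      intro α β h
      have h' : α i < β i := h
      show (∑ m, if β = g α m then co α m else 0) = 0
      rw [hdiag α β h'.le, if_neg (fun e : α = β => by simp [e] at h')]
    refine hbt.det.trans ?_
    refine Finset.prod_eq_one fun a _ => ?_
    have : Matrix.toSquareBlock (fun α β : Fin n → Fin p =>
        ∑ m, if β = g α m then co α m else 0) (fun α => OrderDual.toDual (α i)) a = 1 := by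
      ext1 α β
      have hab : α.1 i = β.1 i := OrderDual.toDual.injective (α.2.trans β.2.symm)
      show (∑ m, if β.1 = g α.1 m then co α.1 m else 0) = _
      rw [hdiag _ _ hab.le, Matrix.one_apply]
      simp [Subtype.ext_iff]
    rw [this, Matrix.det_one]

lemma exists_isU {k : Type*} [Field k] (p n : ℕ) (hp : p.Prime) [CharP k p]
    (A : Matrix (Fin n) (Fin n) k) :
    ∃ U : Matrix (Fin n → Fin p) (Fin n → Fin p) (MvPolynomial (Fin n) k),
      IsU p n A U ∧ U.det = C A.det ^ (p ^ n * (p - 1) / 2) := by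
  induction A using Matrix.diagonal_transvection_induction with
  | hdiag D _ => exact ⟨_, isU_diagonal p n D, det_diagonal p n D⟩
  | htransvec t =>
    obtain ⟨U, hU, hd⟩ := exists_transvection p n hp.pos t.i t.j t.hij t.c
    refine ⟨U, hU, ?_⟩
    rw [hd, Matrix.TransvectionStruct.det]
    simp
  | hmul A B hA hB =>
    obtain ⟨U, hU, hUd⟩ := hA
    obtain ⟨V, hV, hVd⟩ := hB
    refine ⟨_, hU.mul hp hV, ?_⟩
    rw [Matrix.det_mul, ← AlgHom.mapMatrix_apply, ← AlgHom.map_det, hUd, hVd, Matrix.det_mul]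
    simp [mul_pow, algebraMap_eq]

theorem stmt6 {k : Type*} [Field k] (p : ℕ) (hp : p.Prime) [CharP k p] (n : ℕ)
    (A : Matrix (Fin n) (Fin n) k)
    (F : Fin n → MvPolynomial (Fin n) k)
    (hF : ∀ i : Fin n, F i = ∑ j : Fin n, C (A i j) * X j)
    (UF : Matrix (Fin n → Fin p) (Fin n → Fin p) (MvPolynomial (Fin n) k))
    (hUFmem : ∀ α β, UF α β ∈
      Algebra.adjoin k (Set.range fun i : Fin n => (X i : MvPolynomial (Fin n) k) ^ p))
    (hUF : ∀ α : Fin n → Fin p,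
      ∏ i : Fin n, F i ^ (α i : ℕ) = ∑ β : Fin n → Fin p, UF α β * ∏ i : Fin n, X i ^ (β i : ℕ)) :
    UF.det = C A.det ^ (p ^ n * (p - 1) / 2) := by
  obtain ⟨U, hU, hd⟩ := exists_isU p n hp A
  have hUF' : IsU p n A UF := ⟨hUFmem, fun α => by simpa only [hF] using hUF α⟩
  rw [hUF'.unique hp.ne_zero hU, hd]
end

section
/- Let k be a field of characteristic p > 0 and F ∈ k[X]^n. Then Δ(F) = j(F)^q, where j(F) = det(∂fᵢ/∂xⱼ) is the Jacobian of F and q = p^n(p−1)/2. -/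
open MvPolynomial

noncomputable section

open Finset

namespace S9

/-- exponent vector -/
def ex {n p : ℕ} (β : Fin n → Fin p) : Fin n →₀ ℕ :=
  Finsupp.equivFunOnFinite.symm (fun i => (β i : ℕ))

@[simp] lemma ex_apply {n p : ℕ} (β : Fin n → Fin p) (i : Fin n) : ex β i = (β i : ℕ) := rfl

lemma ex_inj {n p : ℕ} {α β : Fin n → Fin p} : ex α = ex β ↔ α = β := by
  constructor
  · intro h
    funext i
    have := DFunLike.congr_fun h i
    exact Fin.ext this
  · rintro rfl; rfl

lemma prod_X_eq {R : Type*} [CommRing R] {n p : ℕ} (β : Fin n → Fin p) :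
    ∏ i : Fin n, (X i : MvPolynomial (Fin n) R) ^ (β i : ℕ) = monomial (ex β) 1 := by
  rw [MvPolynomial.monomial_eq, Finsupp.prod_fintype _ _ (by simp)]
  simp

/-- truncated coefficient matrix -/
def cm {R : Type*} [CommRing R] {n : ℕ} (p : ℕ) (G : Fin n → MvPolynomial (Fin n) R) :
    Matrix (Fin n → Fin p) (Fin n → Fin p) R :=
  Matrix.of fun α β => coeff (ex β) (∏ i, G i ^ (α i : ℕ))

/-- the ideal of p-th powers -/
def I (R : Type*) [CommRing R] (n p : ℕ) : Ideal (MvPolynomial (Fin n) R) :=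
  Ideal.span ((fun s => monomial s (1 : R)) '' (Set.range fun i : Fin n => Finsupp.single i p))

lemma mem_I {R : Type*} [CommRing R] {n p : ℕ} (f : MvPolynomial (Fin n) R) :
    f ∈ I R n p ↔ ∀ β : Fin n → Fin p, coeff (ex β) f = 0 := by
  unfold I
  rw [mem_ideal_span_monomial_image]
  constructor
  · intro h β
    by_contra hc
    obtain ⟨s, ⟨i, rfl⟩, hs⟩ := h (ex β) (by simpa [mem_support_iff] using hc)
    have := hs i
    simp at this
    omega
  · intro h m hm
    by_contra hc
    push Not at hc
    have hlt : ∀ i, m i < p := by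
      intro i
      by_contra hi
      apply hc _ ⟨i, rfl⟩
      simp only [Finsupp.single_le_iff]
      omega
    have := h (fun i => ⟨m i, hlt i⟩)
    rw [mem_support_iff] at hm
    apply hm
    convert this using 2
    ext i; rfl

lemma X_pow_mem {R : Type*} [CommRing R] {n p : ℕ} (i : Fin n) :
    (X i : MvPolynomial (Fin n) R) ^ p ∈ I R n p := by
  rw [X_pow_eq_monomial]
  exact Ideal.subset_span ⟨_, ⟨i, rfl⟩, rfl⟩

/-- equality of determinants from weighted triangularity -/
lemma det_eq {R ι α : Type*} [CommRing R] [Fintype ι] [DecidableEq ι] [LinearOrder α]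
    (b : ι → α) (M N : Matrix ι ι R)
    (h0 : ∀ i j, b j < b i → M i j = 0 ∧ N i j = 0)
    (h1 : ∀ i j, b j = b i → M i j = N i j) : M.det = N.det := by
  have hM : M.BlockTriangular b := fun i j h => (h0 i j h).1
  have hN : N.BlockTriangular b := fun i j h => (h0 i j h).2
  rw [hM.det, hN.det]
  refine Finset.prod_congr rfl fun a _ => ?_
  congr 1
  ext i j
  exact h1 _ _ (j.2.trans i.2.symm)

/-- same initial form -/
def P {R : Type*} [CommRing R] {n : ℕ} (w : (Fin n →₀ ℕ) →+ ℤ) (d : ℤ)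
    (f g : MvPolynomial (Fin n) R) : Prop :=
  ∀ β, (w β < d → coeff β f = 0 ∧ coeff β g = 0) ∧ (w β = d → coeff β f = coeff β g)

lemma P_one {R : Type*} [CommRing R] {n : ℕ} (w : (Fin n →₀ ℕ) →+ ℤ) :
    P w 0 (1 : MvPolynomial (Fin n) R) 1 := by
  intro β
  refine ⟨fun h => ?_, fun _ => rfl⟩
  have : (0 : Fin n →₀ ℕ) ≠ β := by rintro rfl; simp at h
  simp [coeff_one, this]

lemma P_mul {R : Type*} [CommRing R] {n : ℕ} {w : (Fin n →₀ ℕ) →+ ℤ} {d e : ℤ}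
    {f g f' g' : MvPolynomial (Fin n) R} (h : P w d f g) (h' : P w e f' g') :
    P w (d + e) (f * f') (g * g') := by
  intro β
  simp only [coeff_mul]
  constructor
  · intro hlt
    constructor <;>
    · refine Finset.sum_eq_zero fun x hx => ?_
      rw [HasAntidiagonal.mem_antidiagonal] at hx
      have hw : w x.1 + w x.2 = w β := by rw [← hx, map_add]
      rcases lt_or_ge (w x.1) d with h1 | h1
      · simp [((h x.1).1 h1).1, ((h x.1).1 h1).2]
      · have h2 : w x.2 < e := by omega
        simp [((h' x.2).1 h2).1, ((h' x.2).1 h2).2]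
  · intro heq
    refine Finset.sum_congr rfl fun x hx => ?_
    rw [HasAntidiagonal.mem_antidiagonal] at hx
    have hw : w x.1 + w x.2 = w β := by rw [← hx, map_add]
    rcases lt_or_ge (w x.1) d with h1 | h1
    · simp [((h x.1).1 h1).1, ((h x.1).1 h1).2]
    · rcases lt_or_ge (w x.2) e with h2 | h2
      · simp [((h' x.2).1 h2).1, ((h' x.2).1 h2).2]
      · rw [(h x.1).2 (by omega), (h' x.2).2 (by omega)]

lemma P_pow {R : Type*} [CommRing R] {n : ℕ} {w : (Fin n →₀ ℕ) →+ ℤ} {d : ℤ}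
    {f g : MvPolynomial (Fin n) R} (h : P w d f g) (m : ℕ) : P w (m * d) (f ^ m) (g ^ m) := by
  induction m with
  | zero => simpa using P_one w
  | succ m ih =>
    rw [pow_succ, pow_succ]
    convert P_mul ih h using 1
    push_cast; ring

lemma P_prod {R ι : Type*} [CommRing R] {n : ℕ} {w : (Fin n →₀ ℕ) →+ ℤ} (s : Finset ι)
    {d : ι → ℤ} {f g : ι → MvPolynomial (Fin n) R} (h : ∀ i, P w (d i) (f i) (g i)) :
    P w (∑ i ∈ s, d i) (∏ i ∈ s, f i) (∏ i ∈ s, g i) := by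
  classical
  induction s using Finset.induction_on with
  | empty => simpa using P_one w
  | insert a s ha ih =>
    rw [sum_insert ha, prod_insert ha, prod_insert ha]
    exact P_mul (h a) ih

lemma w_eq {n : ℕ} (w : (Fin n →₀ ℕ) →+ ℤ) (m : Fin n →₀ ℕ) :
    w m = ∑ i, (m i : ℤ) * w (Finsupp.single i 1) := by
  conv_lhs => rw [← Finsupp.univ_sum_single m]
  rw [map_sum]
  refine Finset.sum_congr rfl fun i _ => ?_
  have : Finsupp.single i (m i) = m i • Finsupp.single i 1 := by simp
  rw [this, map_nsmul]; simp

lemma det_cm_eq {R : Type*} [CommRing R] {n : ℕ} (p : ℕ) (w : (Fin n →₀ ℕ) →+ ℤ)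
    (G H : Fin n → MvPolynomial (Fin n) R)
    (h : ∀ i, P w (w (Finsupp.single i 1)) (G i) (H i)) :
    (cm p G).det = (cm p H).det := by
  have key : ∀ α : Fin n → Fin p, P w (w (ex α)) (∏ i, G i ^ (α i : ℕ)) (∏ i, H i ^ (α i : ℕ)) := by
    intro α
    rw [w_eq]
    exact P_prod _ fun i => P_pow (h i) _
  apply det_eq (fun α => w (ex α))
  · intro i j hij
    exact (key i (ex j)).1 hij
  · intro i j hij
    exact (key i (ex j)).2 hij

/-- translation matrix -/
def tm {R : Type*} [CommRing R] {n : ℕ} (p : ℕ) (c : Fin n → R) :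
    Matrix (Fin n → Fin p) (Fin n → Fin p) R :=
  Matrix.of fun α γ => ∏ i, (c i ^ ((α i : ℕ) - γ i) * ((α i : ℕ).choose (γ i) : R))

lemma tm_det {R : Type*} [CommRing R] {n : ℕ} (p : ℕ) (c : Fin n → R) : (tm p c).det = 1 := by
  rw [← Matrix.det_one (n := Fin n → Fin p) (R := R)]
  have hle : ∀ α γ : Fin n → Fin p, tm p c α γ ≠ 0 → ∀ i, (γ i : ℕ) ≤ α i := by
    intro α γ h i
    by_contra hlt
    apply h
    refine Finset.prod_eq_zero (mem_univ i) ?_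
    rw [Nat.choose_eq_zero_of_lt (by omega)]; simp
  apply det_eq (fun α => OrderDual.toDual (∑ i, (α i : ℕ)))
  · intro i j hij
    rw [OrderDual.toDual_lt_toDual] at hij
    constructor
    · by_contra hc
      exact absurd (Finset.sum_le_sum fun l _ => hle i j hc l) (not_le.mpr hij)
    · apply Matrix.one_apply_ne
      rintro rfl; simp at hij
  · intro α γ hij
    have hij' : ∑ i, (γ i : ℕ) = ∑ i, (α i : ℕ) := hij
    by_cases hag : α = γ
    · subst hag; simp [tm]
    · rw [Matrix.one_apply_ne hag]
      by_contra hc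
      apply hag
      have := (Finset.sum_eq_sum_iff_of_le (fun l _ => hle α γ hc l)).1 hij'
      funext i
      exact Fin.ext (this i (mem_univ i)).symm

lemma pow_add_C {R : Type*} [CommRing R] {n p : ℕ} (g : MvPolynomial (Fin n) R) (c : R)
    (a : Fin p) : (g + C c) ^ (a : ℕ) =
      ∑ m : Fin p, C (c ^ ((a : ℕ) - m) * ((a : ℕ).choose m : R)) * g ^ (m : ℕ) := by
  rw [Fin.sum_univ_eq_sum_range
    (fun m => C (c ^ ((a : ℕ) - m) * ((a : ℕ).choose m : R)) * g ^ m) p, add_pow]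
  rw [Finset.sum_subset (s₂ := range p)]
  · refine Finset.sum_congr rfl fun m _ => ?_
    simp; ring
  · intro x; simp; omega
  · intro x _ hx
    rw [mem_range] at hx
    rw [Nat.choose_eq_zero_of_lt (by omega)]; simp

lemma cm_add_C {R : Type*} [CommRing R] {n : ℕ} (p : ℕ) (G : Fin n → MvPolynomial (Fin n) R)
    (c : Fin n → R) : cm p (fun i => G i + C (c i)) = tm p c * cm p G := by
  ext α β
  simp only [cm, Matrix.of_apply, Matrix.mul_apply, pow_add_C]
  rw [Finset.prod_univ_sum, Fintype.piFinset_univ, coeff_sum]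
  refine Finset.sum_congr rfl fun γ _ => ?_
  rw [Finset.prod_mul_distrib, ← map_prod, coeff_C_mul]
  rfl

lemma det_cm_add_C {R : Type*} [CommRing R] {n : ℕ} (p : ℕ) (G : Fin n → MvPolynomial (Fin n) R)
    (c : Fin n → R) : (cm p (fun i => G i + C (c i))).det = (cm p G).det := by
  rw [cm_add_C, Matrix.det_mul, tm_det, one_mul]

lemma cm_diag {R : Type*} [CommRing R] {n : ℕ} (p : ℕ) (d : Fin n → R) :
    cm p (fun i => C (d i) * X i) = Matrix.diagonal (fun α => ∏ i, d i ^ (α i : ℕ)) := by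
  ext α β
  simp only [cm, Matrix.of_apply, mul_pow]
  rw [Finset.prod_mul_distrib, prod_X_eq]
  simp only [← map_pow, ← map_prod]
  rw [coeff_C_mul, coeff_monomial, Matrix.diagonal_apply]
  simp [ex_inj]

lemma cm_X {R : Type*} [CommRing R] {n : ℕ} (p : ℕ) :
    cm p (fun i => (X i : MvPolynomial (Fin n) R)) = 1 := by
  have := cm_diag (R := R) (n := n) p (fun _ => 1)
  simpa using this

lemma sum_exp {n p : ℕ} (i : Fin n) :
    ∑ α : Fin n → Fin p, (α i : ℕ) = p ^ n * (p - 1) / 2 := by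
  have h1 : ∑ α : Fin n → Fin p, (α i : ℕ) = ∑ α : Fin n → Fin p, ((Fin.rev (α i) : Fin p) : ℕ) :=
    (Equiv.sum_comp (Equiv.arrowCongr (Equiv.refl (Fin n)) Fin.revPerm)
      (fun α : Fin n → Fin p => (α i : ℕ))).symm
  have h2 : ∑ α : Fin n → Fin p, (α i : ℕ) + ∑ α : Fin n → Fin p, ((Fin.rev (α i) : Fin p) : ℕ)
      = p ^ n * (p - 1) := by
    rw [← Finset.sum_add_distrib]
    rw [Finset.sum_congr rfl (g := fun _ => p - 1)]
    · simp
    · intro α _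
      rw [Fin.val_rev]; omega
  omega

lemma det_diag {R : Type*} [CommRing R] {n : ℕ} (p : ℕ) (d : Fin n → R) :
    (cm p (fun i => C (d i) * X i)).det = (Matrix.diagonal d).det ^ (p ^ n * (p - 1) / 2) := by
  rw [cm_diag, Matrix.det_diagonal, Matrix.det_diagonal, Finset.prod_comm, ← Finset.prod_pow]
  refine Finset.prod_congr rfl fun i _ => ?_
  rw [Finset.prod_pow_eq_pow_sum, sum_exp]

/-- linear forms -/
def lf {R : Type*} [CommRing R] {n : ℕ} (A : Matrix (Fin n) (Fin n) R) (i : Fin n) :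
    MvPolynomial (Fin n) R := ∑ j, C (A i j) * X j

lemma sub_mem_I {R : Type*} [CommRing R] {n p : ℕ} (f : MvPolynomial (Fin n) R) :
    f - ∑ β : Fin n → Fin p, C (coeff (ex β) f) * monomial (ex β) 1 ∈ I R n p := by
  rw [mem_I]
  intro γ
  simp [coeff_sum, coeff_C_mul, coeff_monomial, ex_inj]

lemma lf_pow_mem {R : Type*} [CommRing R] {n p : ℕ} [Fact p.Prime] [CharP R p]
    (B : Matrix (Fin n) (Fin n) R) (i : Fin n) : lf B i ^ p ∈ I R n p := by
  unfold lf
  rw [sum_pow_char]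
  refine Ideal.sum_mem _ fun j _ => ?_
  rw [mul_pow]
  exact Ideal.mul_mem_left _ _ (X_pow_mem j)

lemma cm_mul {R : Type*} [CommRing R] {n p : ℕ} [Fact p.Prime] [CharP R p]
    (A B : Matrix (Fin n) (Fin n) R) : cm p (lf (A * B)) = cm p (lf A) * cm p (lf B) := by
  have hI : ∀ f ∈ I R n p, aeval (lf B) f ∈ I R n p := by
    intro f hf
    have : I R n p ≤ (I R n p).comap (aeval (lf B)).toRingHom := by
      conv_lhs => unfold I
      rw [Ideal.span_le]
      rintro _ ⟨_, ⟨i, rfl⟩, rfl⟩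
      show aeval (lf B) (monomial (Finsupp.single i p) (1 : R)) ∈ I R n p
      rw [← X_pow_eq_monomial, map_pow, aeval_X]
      exact lf_pow_mem B i
    exact this hf
  have hL : ∀ i, aeval (lf B) (lf A i) = lf (A * B) i := by
    intro i
    simp only [lf, map_sum, map_mul, aeval_X, Matrix.mul_apply, algHom_C, algebraMap_eq,
      Finset.sum_mul, Finset.mul_sum]
    rw [Finset.sum_comm]
    simp only [mul_assoc]
  ext α γ
  have h := (mem_I _).1 (hI _ (sub_mem_I (p := p) (∏ i, lf A i ^ (α i : ℕ)))) γ
  rw [map_sub, coeff_sub, sub_eq_zero] at h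
  simp only [map_prod, map_pow, hL, map_sum, map_mul, ← prod_X_eq, aeval_X, algHom_C,
    algebraMap_eq, coeff_sum, coeff_C_mul] at h
  exact h

/-- negated coordinate weight -/
def wneg {n : ℕ} (i : Fin n) : (Fin n →₀ ℕ) →+ ℤ where
  toFun m := -(m i : ℤ)
  map_zero' := by simp
  map_add' a b := by simp; ring

/-- total degree weight -/
def wdeg {n : ℕ} : (Fin n →₀ ℕ) →+ ℤ where
  toFun m := ∑ i, (m i : ℤ)
  map_zero' := by simp
  map_add' a b := by simp [Finset.sum_add_distrib]

lemma lf_diag {R : Type*} [CommRing R] {n : ℕ} (d : Fin n → R) :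
    lf (Matrix.diagonal d) = fun i => C (d i) * X i := by
  funext i
  unfold lf
  rw [Finset.sum_eq_single i]
  · simp
  · intro j _ h; simp [Matrix.diagonal_apply_ne _ h.symm]
  · simp

lemma coeff_lf {R : Type*} [CommRing R] {n : ℕ} (A : Matrix (Fin n) (Fin n) R) (i : Fin n)
    (m : Fin n →₀ ℕ) : coeff m (lf A i) = ∑ j, if Finsupp.single j 1 = m then A i j else 0 := by
  simp [lf, coeff_sum, coeff_C_mul, coeff_X]

lemma det_transvec {R : Type*} [CommRing R] {n : ℕ} (p : ℕ)
    (t : Matrix.TransvectionStruct (Fin n) R) : (cm p (lf t.toMatrix)).det = 1 := by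
  rw [← Matrix.det_one (n := Fin n → Fin p) (R := R), ← cm_X]
  apply det_cm_eq p (wneg t.i)
  intro l
  have hl : lf t.toMatrix l = X l + if l = t.i then C t.c * X t.j else 0 := by
    unfold lf
    simp only [Matrix.TransvectionStruct.toMatrix, Matrix.transvection, Matrix.add_apply, map_add,
      add_mul, Finset.sum_add_distrib]
    congr 1
    · rw [Finset.sum_eq_single l]
      · simp
      · intro j _ h; simp [Matrix.one_apply_ne h.symm]
      · simp
    · rw [Finset.sum_eq_single t.j]
      · by_cases h : l = t.i
        · subst h; simp
        · simp [h, Matrix.single_apply, Ne.symm h]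
      · intro j _ h; simp [Matrix.single_apply, Ne.symm h]
      · simp
  rw [hl]
  intro β
  have hX : wneg t.i β < wneg t.i (Finsupp.single l 1) →
      coeff β (X l : MvPolynomial (Fin n) R) = 0 := by
    intro h
    rw [coeff_X', if_neg]
    rintro rfl
    simp at h
  have hY : wneg t.i β ≤ wneg t.i (Finsupp.single l 1) →
      coeff β (if l = t.i then C t.c * X t.j else 0 : MvPolynomial (Fin n) R) = 0 := by
    intro h
    split_ifs with hli
    · rw [coeff_C_mul, coeff_X', if_neg, mul_zero]
      rintro rfl
      subst hli
      simp [wneg, t.hij.symm, Finsupp.single_apply] at h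
    · simp
  refine ⟨fun h => ⟨?_, hX h⟩, fun h => ?_⟩
  · rw [coeff_add, hX h, hY h.le, add_zero]
  · rw [coeff_add, hY h.le, add_zero]

lemma det_lin_field {K : Type*} [Field K] {n p : ℕ} [Fact p.Prime] [CharP K p]
    (A : Matrix (Fin n) (Fin n) K) :
    (cm p (lf A)).det = A.det ^ (p ^ n * (p - 1) / 2) := by
  induction A using Matrix.diagonal_transvection_induction with
  | hdiag D _ => rw [lf_diag, det_diag]
  | htransvec t => rw [det_transvec]; simp
  | hmul A B hA hB => rw [cm_mul, Matrix.det_mul, hA, hB, Matrix.det_mul, mul_pow]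

lemma det_lin {R : Type*} [CommRing R] [IsDomain R] {n p : ℕ} [Fact p.Prime] [CharP R p]
    (A : Matrix (Fin n) (Fin n) R) :
    (cm p (lf A)).det = A.det ^ (p ^ n * (p - 1) / 2) := by
  let φ := algebraMap R (FractionRing R)
  have hφ : Function.Injective φ := IsFractionRing.injective R (FractionRing R)
  haveI : CharP (FractionRing R) p := charP_of_injective_algebraMap hφ p
  apply hφ
  rw [map_pow, RingHom.map_det, RingHom.map_det, ← det_lin_field]
  congr 1
  ext α β
  simp only [cm, RingHom.mapMatrix_apply, Matrix.map_apply, Matrix.of_apply]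
  rw [← coeff_map]
  simp [lf, map_prod, map_sum]

/-- Taylor expansion -/
def tay {k : Type*} [CommRing k] {n : ℕ} :
    MvPolynomial (Fin n) k →ₐ[k] MvPolynomial (Fin n) (MvPolynomial (Fin n) k) :=
  aeval (fun i => X i + C (X i))

lemma tay_X {k : Type*} [CommRing k] {n : ℕ} (i : Fin n) :
    tay (X i : MvPolynomial (Fin n) k) = X i + C (X i) := by simp [tay]

lemma tay_C {k : Type*} [CommRing k] {n : ℕ} (a : k) :
    tay (C a : MvPolynomial (Fin n) k) = C (C a) := by
  simp [tay]

lemma tay_coeff_zero {k : Type*} [CommRing k] {n : ℕ} (f : MvPolynomial (Fin n) k) :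
    coeff 0 (tay f) = f := by
  induction f using MvPolynomial.induction_on with
  | C a => rw [tay_C]; simp
  | add f g hf hg => rw [map_add, coeff_add, hf, hg]
  | mul_X f i hf =>
    rw [map_mul, tay_X, mul_add, coeff_add, mul_comm _ (C (X i)), coeff_C_mul, hf, coeff_mul_X']
    simp [mul_comm]

lemma tay_coeff_one {k : Type*} [CommRing k] {n : ℕ} (f : MvPolynomial (Fin n) k) (j : Fin n) :
    coeff (Finsupp.single j 1) (tay f) = pderiv j f := by
  induction f using MvPolynomial.induction_on with
  | C a =>
    rw [tay_C, coeff_C, if_neg]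
    · simp
    · intro h
      have := DFunLike.congr_fun h j
      simp at this
  | add f g hf hg => rw [map_add, coeff_add, hf, hg, map_add]
  | mul_X f i hf =>
    rw [map_mul, tay_X, mul_add, coeff_add, mul_comm _ (C (X i)), coeff_C_mul, hf, coeff_mul_X',
      pderiv_mul, pderiv_X]
    by_cases h : i = j
    · subst h
      simp [tay_coeff_zero]; ring
    · have : i ∉ (Finsupp.single j 1 : Fin n →₀ ℕ).support := by
        simpa using h
      rw [if_neg this, Pi.single_eq_of_ne (by simpa using h)]
      ring

lemma tay_adjoin {k : Type*} [Field k] {n p : ℕ} [Fact p.Prime] [CharP k p]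
    (u : MvPolynomial (Fin n) k)
    (hu : u ∈ Algebra.adjoin k (Set.range fun i : Fin n => (X i : MvPolynomial (Fin n) k) ^ p)) :
    tay u - C u ∈ I (MvPolynomial (Fin n) k) n p := by
  induction hu using Algebra.adjoin_induction with
  | mem x hx =>
    obtain ⟨i, rfl⟩ := hx
    simp only [map_pow, tay_X]
    rw [add_pow_char]
    simpa using X_pow_mem i
  | algebraMap r =>
    rw [algebraMap_eq, tay_C]; simp
  | add x y _ _ hx hy =>
    have : tay (x + y) - C (x + y) = (tay x - C x) + (tay y - C y) := by
      rw [map_add, map_add]; ring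
    rw [this]; exact add_mem hx hy
  | mul x y _ _ hx hy =>
    have : tay (x * y) - C (x * y) = tay x * (tay y - C y) + C y * (tay x - C x) := by
      rw [map_mul, map_mul]; ring
    rw [this]; exact add_mem (Ideal.mul_mem_left _ _ hy) (Ideal.mul_mem_left _ _ hx)

lemma lowdeg {n : ℕ} (β : Fin n →₀ ℕ) (h : wdeg β < 1) : β = 0 := by
  have h' : ∑ i, (β i : ℤ) < 1 := h
  ext i
  have := Finset.single_le_sum (f := fun i => (β i : ℤ)) (fun i _ => by positivity) (mem_univ i)
  simp at this ⊢
  omega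

lemma onedeg {n : ℕ} (β : Fin n →₀ ℕ) (h : wdeg β = 1) : ∃ j, β = Finsupp.single j 1 := by
  have h' : ∑ i, (β i : ℤ) = 1 := h
  have hne : β ≠ 0 := by rintro rfl; simp at h
  obtain ⟨j, hj⟩ := Finsupp.ne_iff.1 hne
  refine ⟨j, ?_⟩
  simp at hj
  rw [← Finset.add_sum_erase _ _ (mem_univ j)] at h'
  have h0 : 0 ≤ ∑ i ∈ univ.erase j, (β i : ℤ) := Finset.sum_nonneg fun _ _ => by positivity
  have h1 : ∑ i ∈ univ.erase j, (β i : ℤ) = 0 := by omega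
  rw [Finset.sum_eq_zero_iff_of_nonneg (fun _ _ => by positivity)] at h1
  ext i
  by_cases hi : i = j
  · subst hi; simp; omega
  · have := h1 i (by simp [hi])
    simp [Finsupp.single_apply, Ne.symm hi]
    exact_mod_cast this

lemma wdeg_single {n : ℕ} (i : Fin n) : wdeg (Finsupp.single i 1) = 1 := by
  simp [wdeg, Finsupp.single_apply]

end S9

end

open S9 in
theorem stmt9 {k : Type*} [Field k] (p : ℕ) (hp : p.Prime) [CharP k p] (n : ℕ)
    (F : Fin n → MvPolynomial (Fin n) k)
    (UF : Matrix (Fin n → Fin p) (Fin n → Fin p) (MvPolynomial (Fin n) k))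
    (hUFmem : ∀ α β, UF α β ∈
      Algebra.adjoin k (Set.range fun i : Fin n => (X i : MvPolynomial (Fin n) k) ^ p))
    (hUF : ∀ α : Fin n → Fin p,
      ∏ i : Fin n, F i ^ (α i : ℕ) = ∑ β : Fin n → Fin p, UF α β * ∏ i : Fin n, X i ^ (β i : ℕ)) :
    UF.det = jac F ^ (p ^ n * (p - 1) / 2) := by
  haveI : Fact p.Prime := ⟨hp⟩
  have h1 : cm p (fun i => tay (F i)) =
      UF * cm p (fun i => (X i + C (X i) : MvPolynomial (Fin n) (MvPolynomial (Fin n) k))) := by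
    ext1 α γ
    have hmem : ∏ i, tay (F i) ^ (α i : ℕ) - ∑ β : Fin n → Fin p, C (UF α β) *
        ∏ i : Fin n, (X i + C (X i)) ^ (β i : ℕ) ∈ I (MvPolynomial (Fin n) k) n p := by
      have := congrArg tay (hUF α)
      simp only [map_prod, map_pow, map_sum, map_mul, tay_X] at this
      rw [this, ← Finset.sum_sub_distrib]
      refine Ideal.sum_mem _ fun β _ => ?_
      rw [← sub_mul]
      exact Ideal.mul_mem_right _ _ (tay_adjoin _ (hUFmem α β))
    have := (mem_I _).1 hmem γ
    rw [coeff_sub, sub_eq_zero, coeff_sum] at this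
    simp only [coeff_C_mul] at this
    exact this
  have h2 : (cm p (fun i => tay (F i))).det = UF.det := by
    rw [h1, Matrix.det_mul, det_cm_add_C, cm_X, Matrix.det_one, mul_one]
  have h3 : (cm p (fun i => tay (F i))).det = (cm p (fun i => tay (F i) - C (F i))).det := by
    rw [← det_cm_add_C p (fun i => tay (F i) - C (F i)) F]
    simp
  rw [← h2, h3, det_cm_eq p wdeg _ (lf (Matrix.of fun i j : Fin n => pderiv j (F i))), det_lin]
  · rfl
  · intro i
    rw [wdeg_single]
    intro β
    constructor
    · intro h
      obtain rfl := lowdeg β h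
      simp [tay_coeff_zero, coeff_lf]
    · intro h
      obtain ⟨j, rfl⟩ := onedeg β h
      have h0 : ¬ (0 = (Finsupp.single j 1 : Fin n →₀ ℕ)) := by
        intro h
        have := DFunLike.congr_fun h j
        simp at this
      rw [coeff_sub, tay_coeff_one, coeff_C, if_neg h0, coeff_lf]
      simp [Finsupp.single_left_inj]
end

section
/- Let k be a field of characteristic p > 0 and F = (f₁,…,fₙ) ∈ k[X]^n. Then k[X] · j(F)^q ⊆ k[X^p][F], i.e. for every g ∈ k[X], the product g·j(F)^q lies in the subalgebra of k[X] generated by x₁^p,…,xₙ^p together with f₁,…,fₙ; here q = p^n(p−1)/2. -/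
open MvPolynomial

namespace JacPf

variable {n p : ℕ} {R : Type*} [CommRing R]

noncomputable def e (a : Fin n → Fin p) : Fin n →₀ ℕ :=
  Finsupp.equivFunOnFinite.symm (fun i => (a i : ℕ))

lemma e_apply (a : Fin n → Fin p) (i : Fin n) : e a i = (a i : ℕ) := rfl

lemma e_inj {a b : Fin n → Fin p} : e a = e b ↔ a = b := by
  constructor
  · intro h
    funext i
    exact Fin.ext (by simpa [e_apply] using DFunLike.congr_fun h i)
  · rintro rfl; rfl

noncomputable def NN (P : Fin n → MvPolynomial (Fin n) R) :
    Matrix (Fin n → Fin p) (Fin n → Fin p) R :=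
  Matrix.of fun a b => coeff (e b) (∏ i, P i ^ (a i : ℕ))

noncomputable def LL (n p : ℕ) (R : Type*) [CommRing R] : Ideal (MvPolynomial (Fin n) R) :=
  Ideal.span (Set.range fun i => (X i : MvPolynomial (Fin n) R) ^ p)

lemma coeff_LL {f : MvPolynomial (Fin n) R} (hf : f ∈ LL n p R) (b : Fin n → Fin p) :
    coeff (e b) f = 0 := by
  unfold LL at hf
  induction hf using Submodule.span_induction generalizing b with
  | mem x h =>
    obtain ⟨i, rfl⟩ := h
    simp only
    rw [coeff_X_pow, if_neg]
    intro h
    have := DFunLike.congr_fun h i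
    simp [e_apply] at this
    have := (b i).2
    omega
  | zero => simp
  | add x y _ _ hx hy => simp [hx, hy]
  | smul a x hx _ =>
    revert b
    intro b
    rename_i ih
    rw [smul_eq_mul, coeff_mul]
    apply Finset.sum_eq_zero
    rintro ⟨u, v⟩ huv
    rw [Finset.HasAntidiagonal.mem_antidiagonal] at huv
    simp only at huv ⊢
    have hv : ∀ i, v i < p := fun i => by
      have := DFunLike.congr_fun huv i
      simp [e_apply] at this
      have := (b i).2
      omega
    have := ih (fun i => ⟨v i, hv i⟩)
    have h2 : e (fun i => (⟨v i, hv i⟩ : Fin p)) = v := by ext i; rfl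
    rw [h2] at this
    rw [this, mul_zero]

lemma pow_mem_LL [Fact p.Prime] [CharP R p] {Q : MvPolynomial (Fin n) R}
    (hQ : coeff 0 Q = 0) : Q ^ p ∈ LL n p R := by
  rw [Q.as_sum, sum_pow_char]
  apply Ideal.sum_mem
  intro m hm
  have hm0 : m ≠ 0 := by
    rintro rfl
    exact (mem_support_iff.1 hm) hQ
  obtain ⟨i, hi⟩ := Finsupp.ne_iff.1 hm0
  rw [monomial_eq, mul_pow, Finsupp.prod_fintype _ _ (by simp)]
  apply Ideal.mul_mem_left
  have h1 : (X i : MvPolynomial (Fin n) R) ^ p ∣ (∏ i, X i ^ m i) ^ p := by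
    apply pow_dvd_pow_of_dvd
    refine dvd_trans (dvd_pow_self _ hi) (Finset.dvd_prod_of_mem _ (Finset.mem_univ i))
  exact Ideal.mem_of_dvd _ h1 (Ideal.subset_span ⟨i, rfl⟩)

lemma coeff_comp [Fact p.Prime] [CharP R p] (Q : Fin n → MvPolynomial (Fin n) R)
    (hQ : ∀ i, coeff 0 (Q i) = 0) (f : MvPolynomial (Fin n) R) (c : Fin n → Fin p) :
    coeff (e c) (bind₁ Q f) =
      ∑ b : Fin n → Fin p, coeff (e b) f * coeff (e c) (∏ i, Q i ^ (b i : ℕ)) := by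
  classical
  induction f using MvPolynomial.induction_on' with
  | add f g hf hg => simp [hf, hg, add_mul, Finset.sum_add_distrib]
  | monomial m r =>
    rw [bind₁_monomial, coeff_C_mul, Finset.prod_subset (Finset.subset_univ m.support)
      (fun i _ hi => by simp [Finsupp.notMem_support_iff.1 hi])]
    by_cases h : ∀ i, m i < p
    · have hm : m = e (fun i => (⟨m i, h i⟩ : Fin p)) := by ext i; rfl
      rw [Finset.sum_eq_single (fun i => (⟨m i, h i⟩ : Fin p))]
      · rw [← hm]; simp
      · intro b _ hb
        rw [coeff_monomial, if_neg, zero_mul]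
        rw [hm, e_inj]
        exact fun h => hb h.symm
      · simp
    · push Not at h
      obtain ⟨i, hi⟩ := h
      rw [coeff_LL (f := ∏ i, Q i ^ m i), mul_zero, Finset.sum_eq_zero]
      · intro b _
        rw [coeff_monomial, if_neg, zero_mul]
        intro hm
        have := DFunLike.congr_fun hm i
        simp [e_apply] at this
        have := (b i).2
        omega
      · refine Ideal.mem_of_dvd _ ?_ (pow_mem_LL (hQ i))
        exact dvd_trans (pow_dvd_pow _ hi)
          (Finset.dvd_prod_of_mem (fun i => Q i ^ m i) (Finset.mem_univ i))

lemma NN_comp [Fact p.Prime] [CharP R p] (P Q : Fin n → MvPolynomial (Fin n) R)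
    (hQ : ∀ i, coeff 0 (Q i) = 0) :
    (NN (fun i => bind₁ Q (P i)) : Matrix (Fin n → Fin p) (Fin n → Fin p) R) =
      NN P * NN Q := by
  ext a c
  rw [Matrix.mul_apply]
  simp only [NN, Matrix.of_apply]
  rw [← coeff_comp Q hQ, map_prod]
  simp

/-! triangularity -/

def Up (w : Fin n → ℤ) (d : ℤ) (f : MvPolynomial (Fin n) R) : Prop :=
  ∀ m, coeff m f ≠ 0 → d ≤ ∑ i, (m i : ℤ) * w i

lemma Up.add {w : Fin n → ℤ} {d : ℤ} {f g : MvPolynomial (Fin n) R}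
    (hf : Up w d f) (hg : Up w d g) : Up w d (f + g) := by
  intro m hm
  by_cases h : coeff m f = 0
  · exact hg m (by simpa [h] using hm)
  · exact hf m h

lemma Up.mul {w : Fin n → ℤ} {d d' : ℤ} {f g : MvPolynomial (Fin n) R}
    (hf : Up w d f) (hg : Up w d' g) : Up w (d + d') (f * g) := by
  classical
  intro m hm
  rw [coeff_mul] at hm
  obtain ⟨⟨u, v⟩, huv, h⟩ := Finset.exists_ne_zero_of_sum_ne_zero hm
  rw [Finset.HasAntidiagonal.mem_antidiagonal] at huv
  simp only at huv h
  have h1 := hf u (left_ne_zero_of_mul h)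
  have h2 := hg v (right_ne_zero_of_mul h)
  subst huv
  simp only [Finsupp.add_apply, Nat.cast_add, add_mul, Finset.sum_add_distrib]
  omega

lemma Up.mono {w : Fin n → ℤ} {d d' : ℤ} {f : MvPolynomial (Fin n) R}
    (hf : Up w d f) (h : d' ≤ d) : Up w d' f := fun m hm => h.trans (hf m hm)

def EE (w : Fin n → ℤ) (d : ℤ) (f g : MvPolynomial (Fin n) R) : Prop :=
  Up w d g ∧ Up w (d + 1) (f - g)

lemma EE.left {w : Fin n → ℤ} {d : ℤ} {f g : MvPolynomial (Fin n) R} (h : EE w d f g) :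
    Up w d f := by
  have := h.1.add (h.2.mono (by omega : d ≤ d + 1))
  simpa using this

lemma EE.mul {w : Fin n → ℤ} {d d' : ℤ} {f g f' g' : MvPolynomial (Fin n) R}
    (h : EE w d f g) (h' : EE w d' f' g') : EE w (d + d') (f * f') (g * g') := by
  refine ⟨h.1.mul h'.1, ?_⟩
  have h1 := (h.2.mul h'.left).mono (by omega : d + d' + 1 ≤ _)
  have h2 := (h.1.mul h'.2).mono (by omega : d + d' + 1 ≤ _)
  have := h1.add h2
  have he : f * f' - g * g' = (f - g) * f' + g * (f' - g') := by ring
  rwa [he]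

lemma EE.one (w : Fin n → ℤ) : EE w 0 (1 : MvPolynomial (Fin n) R) 1 := by
  classical
  refine ⟨?_, ?_⟩
  · intro m hm
    rw [coeff_one] at hm
    have : 0 = m := by by_contra h; simp [h] at hm
    subst this; simp
  · intro m hm; simp at hm

lemma EE.pow {w : Fin n → ℤ} {d : ℤ} {f g : MvPolynomial (Fin n) R}
    (h : EE w d f g) (k : ℕ) : EE w (k * d) (f ^ k) (g ^ k) := by
  induction k with
  | zero => simpa using EE.one w
  | succ k ih =>
    have := ih.mul h
    rw [pow_succ, pow_succ]
    convert this using 1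
    push_cast; ring

lemma EE.prod {w : Fin n → ℤ} (s : Finset (Fin n)) {d : Fin n → ℤ}
    {f g : Fin n → MvPolynomial (Fin n) R}
    (h : ∀ i, EE w (d i) (f i) (g i)) :
    EE w (∑ i ∈ s, d i) (∏ i ∈ s, f i) (∏ i ∈ s, g i) := by
  classical
  induction s using Finset.induction_on with
  | empty => simpa using EE.one w
  | insert i s hi ih =>
    rw [Finset.sum_insert hi, Finset.prod_insert hi, Finset.prod_insert hi]
    exact (h i).mul ih

lemma prod_X_pow (a : Fin n → Fin p) :
    (∏ i, (X i : MvPolynomial (Fin n) R) ^ (a i : ℕ)) = monomial (e a) 1 := by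
  rw [monomial_eq, Finsupp.prod_fintype _ _ (by simp)]
  simp [e_apply]

lemma det_NN_tri (w : Fin n → ℤ) (P : Fin n → MvPolynomial (Fin n) R)
    (hP : ∀ i, Up w (w i + 1) (P i - X i)) :
    (NN P : Matrix (Fin n → Fin p) (Fin n → Fin p) R).det = 1 := by
  classical
  have hE : ∀ i, EE w (w i) (P i) (X i) := fun i => ⟨by
    intro m hm
    rw [coeff_X] at hm
    have : Finsupp.single i 1 = m := by by_contra h; simp [h] at hm
    subst this
    rw [Finset.sum_eq_single i] <;> simp +contextual [Finsupp.single_apply, eq_comm], hP i⟩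
  set W : (Fin n → Fin p) → ℤ := fun a => ∑ i, ((a i : ℕ) : ℤ) * w i with hW
  have key : ∀ a b : Fin n → Fin p, W b ≤ W a →
      (NN P : Matrix (Fin n → Fin p) (Fin n → Fin p) R) a b = if a = b then 1 else 0 := by
    intro a b hab
    have h := EE.prod (Finset.univ) (fun i => (hE i).pow (a i : ℕ))
    have h2 : coeff (e b) (∏ i, P i ^ (a i : ℕ) - ∏ i, X i ^ (a i : ℕ)) = 0 := by
      by_contra hc
      have := h.2 _ hc
      simp only [e_apply] at this
      simp only [hW] at hab
      omega
    rw [coeff_sub, prod_X_pow, coeff_monomial, sub_eq_zero] at h2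
    simp only [e_inj] at h2
    exact h2
  have hT : (NN P : Matrix (Fin n → Fin p) (Fin n → Fin p) R).BlockTriangular W := by
    intro a b hab
    rw [key a b hab.le, if_neg]
    rintro rfl
    exact lt_irrefl _ hab
  rw [hT.det]
  apply Finset.prod_eq_one
  intro k _
  have : (NN P : Matrix (Fin n → Fin p) (Fin n → Fin p) R).toSquareBlock W k = 1 := by
    ext ⟨a, ha⟩ ⟨b, hb⟩
    rw [Matrix.toSquareBlock_def, Matrix.of_apply, key a b (by rw [ha, hb]), Matrix.one_apply]
    simp [Subtype.ext_iff]
  rw [this, Matrix.det_one]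

lemma det_NN_shift (c : Fin n → R) :
    (NN (fun i => C (c i) + X i) : Matrix (Fin n → Fin p) (Fin n → Fin p) R).det = 1 := by
  classical
  apply det_NN_tri (fun _ => -1)
  intro i m hm
  simp only [add_sub_cancel_right] at hm
  rw [coeff_C] at hm
  have : 0 = m := by by_contra h; simp [h] at hm
  subst this; simp

lemma det_NN_hot (P : Fin n → MvPolynomial (Fin n) R) (h0 : ∀ i, coeff 0 (P i) = 0)
    (h1 : ∀ i j, coeff (Finsupp.single j 1) (P i) = if i = j then 1 else 0) :
    (NN P : Matrix (Fin n → Fin p) (Fin n → Fin p) R).det = 1 := by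
  classical
  apply det_NN_tri (fun _ => 1)
  intro i m hm
  by_contra hlt
  push Not at hlt
  simp only [mul_one] at hlt
  have hs : ∑ i, m i < 2 := by exact_mod_cast hlt
  apply hm
  by_cases hm0 : m = 0
  · subst hm0; simp [h0]
  obtain ⟨j, hj⟩ := Finsupp.ne_iff.1 hm0
  have : m = Finsupp.single j 1 := by
    have h3 := Finset.add_sum_erase Finset.univ (fun i => m i) (Finset.mem_univ j)
    simp only [Finsupp.coe_zero, Pi.zero_apply] at hj
    have h4 : ∑ x ∈ Finset.univ.erase j, m x = 0 := by omega
    rw [Finset.sum_eq_zero_iff] at h4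
    ext l
    by_cases hl : j = l
    · subst hl; simp; omega
    · rw [Finsupp.single_eq_of_ne (Ne.symm hl)]
      exact h4 l (by simp [Ne.symm hl])
  subst this
  rw [coeff_sub, h1, coeff_X]
  simp only [Finsupp.single_left_inj one_ne_zero, sub_self]

noncomputable def lin (J : Matrix (Fin n) (Fin n) R) : Fin n → MvPolynomial (Fin n) R :=
  fun i => ∑ j, C (J i j) * X j

lemma lin_coeff0 (J : Matrix (Fin n) (Fin n) R) (i) : coeff 0 (lin J i) = 0 := by
  simp [lin, coeff_sum]

lemma NN_lin_mul [Fact p.Prime] [CharP R p] (A B : Matrix (Fin n) (Fin n) R) :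
    (NN (lin (A * B)) : Matrix (Fin n → Fin p) (Fin n → Fin p) R) =
      NN (lin A) * NN (lin B) := by
  rw [← NN_comp _ _ (lin_coeff0 B)]
  congr 1
  funext i
  simp only [lin, map_sum, map_mul, bind₁_C_right, bind₁_X_right, Matrix.mul_apply,
    Finset.sum_mul, Finset.mul_sum, mul_assoc]
  rw [Finset.sum_comm]

lemma sum_count (hp : 0 < p) (i : Fin n) :
    ∑ a : Fin n → Fin p, (a i : ℕ) = p ^ n * (p - 1) / 2 := by
  have : NeZero p := ⟨hp.ne'⟩
  have h1 : ∑ a : Fin n → Fin p, (a i : ℕ) = ∑ a : Fin n → Fin p, ((a i).rev : ℕ) :=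
    (Equiv.sum_comp (Equiv.arrowCongr (Equiv.refl (Fin n)) (Fin.revPerm (n := p)))
      (fun a : Fin n → Fin p => (a i : ℕ))).symm
  have h2 : ∑ a : Fin n → Fin p, ((a i : ℕ) + ((a i).rev : ℕ)) = p ^ n * (p - 1) := by
    rw [Finset.sum_congr rfl (g := fun _ => p - 1)]
    · simp
    · intro a _
      rw [Fin.val_rev]
      have := (a i).2
      omega
  rw [Finset.sum_add_distrib, ← h1] at h2
  omega

lemma det_NN_diag (hp : 0 < p) (D : Fin n → R) :
    (NN (lin (Matrix.diagonal D)) : Matrix (Fin n → Fin p) (Fin n → Fin p) R).det =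
      (Matrix.diagonal D).det ^ (p ^ n * (p - 1) / 2) := by
  classical
  have h : (NN (lin (Matrix.diagonal D)) : Matrix (Fin n → Fin p) (Fin n → Fin p) R) =
      Matrix.diagonal (fun a => ∏ i, D i ^ (a i : ℕ)) := by
    ext a b
    have hl : ∀ i, lin (Matrix.diagonal D) i = C (D i) * X i := by
      intro i
      rw [lin, Finset.sum_eq_single i] <;> simp +contextual [Matrix.diagonal_apply, eq_comm]
    simp only [NN, Matrix.of_apply, hl, mul_pow, Finset.prod_mul_distrib, prod_X_pow]
    rw [show (∏ i, (C (D i) : MvPolynomial (Fin n) R) ^ (a i : ℕ)) = C (∏ i, D i ^ (a i : ℕ)) by simp]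
    rw [coeff_C_mul, coeff_monomial, Matrix.diagonal_apply]
    simp only [e_inj]
    simp
  rw [h, Matrix.det_diagonal, Matrix.det_diagonal, Finset.prod_comm, ← Finset.prod_pow]
  apply Finset.prod_congr rfl
  intro i _
  rw [Finset.prod_pow_eq_pow_sum, sum_count hp]

lemma det_NN_lin {K : Type*} [Field K] [Fact p.Prime] [CharP K p] (J : Matrix (Fin n) (Fin n) K) :
    (NN (lin J) : Matrix (Fin n → Fin p) (Fin n → Fin p) K).det =
      J.det ^ (p ^ n * (p - 1) / 2) := by
  classical
  induction J using Matrix.diagonal_transvection_induction with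
  | hdiag D => exact det_NN_diag (Fact.out : p.Prime).pos D
  | htransvec t =>
    rw [Matrix.TransvectionStruct.det, one_pow]
    obtain ⟨i, j, hij, c⟩ := t
    apply det_NN_tri (fun l => if l = j then 2 else 1)
    intro l m hm
    have hl : lin (Matrix.TransvectionStruct.toMatrix ⟨i, j, hij, c⟩) l - X l =
        if l = i then C c * X j else 0 := by
      simp only [lin, Matrix.TransvectionStruct.toMatrix, Matrix.transvection, Matrix.add_apply,
        map_add, add_mul, Finset.sum_add_distrib, Matrix.one_apply, Matrix.single_apply]
      rw [Finset.sum_eq_single l (by simp +contextual [eq_comm]) (by simp),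
        Finset.sum_eq_single j (by simp +contextual [eq_comm]) (by simp)]
      by_cases h : l = i
      · simp [h]
      · simp [h, Ne.symm h]
    rw [hl] at hm
    by_cases h : l = i
    · subst h
      rw [if_pos rfl, coeff_C_mul, coeff_X] at hm
      have : Finsupp.single j 1 = m := by by_contra h; simp [h] at hm
      subst this
      rw [Finset.sum_eq_single j] <;> simp +contextual [Finsupp.single_apply, eq_comm, hij]
      simp [Ne.symm hij]
    · simp [h] at hm
  | hmul A B hA hB => rw [NN_lin_mul, Matrix.det_mul, hA, hB, Matrix.det_mul, mul_pow]

lemma det_NN_field {K : Type*} [Field K] [Fact p.Prime] [CharP K p]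
    (P : Fin n → MvPolynomial (Fin n) K) (h0 : ∀ i, coeff 0 (P i) = 0)
    (hJ : (Matrix.of fun i j => coeff (Finsupp.single j 1) (P i)).det ≠ 0) :
    (NN P : Matrix (Fin n → Fin p) (Fin n → Fin p) K).det =
      (Matrix.of fun i j => coeff (Finsupp.single j 1) (P i)).det ^ (p ^ n * (p - 1) / 2) := by
  classical
  set J : Matrix (Fin n) (Fin n) K := Matrix.of fun i j => coeff (Finsupp.single j 1) (P i) with hJd
  have hu : IsUnit J.det := isUnit_iff_ne_zero.2 hJ
  set P' : Fin n → MvPolynomial (Fin n) K := fun i => ∑ j, C (J⁻¹ i j) * P j with hP'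
  have h0' : ∀ i, coeff 0 (P' i) = 0 := by
    intro i; simp [hP', coeff_sum, coeff_C_mul, h0, -constantCoeff_eq]
  have hP : P = fun i => bind₁ P' (lin J i) := by
    funext i
    simp only [lin, hP', map_sum, map_mul, bind₁_C_right, bind₁_X_right, Finset.mul_sum]
    rw [Finset.sum_comm]
    have : ∀ l, ∑ j, C (J i j) * (C (J⁻¹ j l) * P l) = C ((J * J⁻¹) i l) * P l := by
      intro l
      simp [Matrix.mul_apply, Finset.sum_mul, mul_assoc]
    simp only [this]
    rw [Matrix.mul_nonsing_inv _ hu]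
    rw [Finset.sum_eq_single i] <;> simp +contextual [Matrix.one_apply, eq_comm]
  conv_lhs => rw [hP]
  rw [NN_comp _ _ h0', Matrix.det_mul, det_NN_lin, det_NN_hot P' h0', mul_one]
  intro i j
  have : (J⁻¹ * J) i j = if i = j then 1 else 0 := by
    rw [Matrix.nonsing_inv_mul _ hu, Matrix.one_apply]
  rw [← this, Matrix.mul_apply]
  simp [hP', coeff_sum, coeff_C_mul, hJd]

lemma NN_map {S : Type*} [CommRing S] (φ : R →+* S) (P : Fin n → MvPolynomial (Fin n) R) :
    (NN (fun i => MvPolynomial.map φ (P i)) : Matrix (Fin n → Fin p) (Fin n → Fin p) S) =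
      φ.mapMatrix (NN P) := by
  ext a b
  simp only [NN, Matrix.of_apply, RingHom.mapMatrix_apply, Matrix.map_apply]
  rw [← coeff_map, map_prod]
  simp

lemma det_NN_dom [IsDomain R] [Fact p.Prime] [CharP R p]
    (P : Fin n → MvPolynomial (Fin n) R) (h0 : ∀ i, coeff 0 (P i) = 0)
    (hJ : (Matrix.of fun i j => coeff (Finsupp.single j 1) (P i)).det ≠ 0) :
    (NN P : Matrix (Fin n → Fin p) (Fin n → Fin p) R).det =
      (Matrix.of fun i j => coeff (Finsupp.single j 1) (P i)).det ^ (p ^ n * (p - 1) / 2) := by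
  have hinj : Function.Injective (algebraMap R (FractionRing R)) := IsFractionRing.injective _ _
  have : CharP (FractionRing R) p := charP_of_injective_algebraMap hinj p
  have hd : (Matrix.of fun i j => coeff (Finsupp.single j 1)
      (MvPolynomial.map (algebraMap R (FractionRing R)) (P i))).det =
      algebraMap R (FractionRing R) (Matrix.of fun i j => coeff (Finsupp.single j 1) (P i)).det := by
    rw [RingHom.map_det]
    congr 1
  apply hinj
  have h := det_NN_field (p := p) (fun i => MvPolynomial.map (algebraMap R (FractionRing R)) (P i))
    (fun i => by rw [coeff_map, h0, map_zero]) (by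
      rw [hd]; exact fun h => hJ (hinj (by rw [h, map_zero])))
  rw [hd, NN_map, ← RingHom.map_det] at h
  rw [h, map_pow]

/-! Taylor shift -/

noncomputable def Th (n : ℕ) (k : Type*) [CommRing k] :
    MvPolynomial (Fin n) k →ₐ[k] MvPolynomial (Fin n) (MvPolynomial (Fin n) k) :=
  aeval fun i => C (X i) + X i

lemma Th_X (i : Fin n) : Th n R (X i) = C (X i) + X i := by simp [Th]

lemma Th_C (r : R) : Th n R (C r) = C (C r) := by
  simp [Th, MvPolynomial.algebraMap_apply]

lemma Th_coeff0 (f : MvPolynomial (Fin n) R) : coeff 0 (Th n R f) = f := by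
  classical
  induction f using MvPolynomial.induction_on with
  | C r => rw [Th_C, coeff_C]; simp
  | add f g hf hg => rw [map_add, coeff_add, hf, hg]
  | mul_X f i hf =>
    rw [map_mul, Th_X, mul_add, coeff_add, coeff_mul_X', mul_comm, coeff_C_mul, hf]
    simp [mul_comm]

lemma Th_coeff1 (f : MvPolynomial (Fin n) R) (j : Fin n) :
    coeff (Finsupp.single j 1) (Th n R f) = pderiv j f := by
  classical
  induction f using MvPolynomial.induction_on with
  | C r => 
    rw [Th_C, coeff_C, pderiv_C, if_neg]
    intro h
    simpa using DFunLike.congr_fun h j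
  | add f g hf hg => rw [map_add, coeff_add, hf, hg, map_add]
  | mul_X f i hf =>
    rw [map_mul, Th_X, mul_add, coeff_add, coeff_mul_X', mul_comm, coeff_C_mul, hf,
      pderiv_mul, pderiv_X]
    by_cases h : i = j
    · subst h
      simp [Th_coeff0, mul_comm]
    · simp [Finsupp.single_apply, h, Ne.symm h, mul_comm, Pi.single_apply]

noncomputable def SS (n p : ℕ) (k : Type*) [CommRing k] : Subalgebra k (MvPolynomial (Fin n) k) :=
  Algebra.adjoin k (Set.range fun i : Fin n => (X i : MvPolynomial (Fin n) k) ^ p)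

lemma Th_SS [Fact p.Prime] [CharP R p] (m : MvPolynomial (Fin n) R) (hm : m ∈ SS n p R) :
    Th n R m - C m ∈ LL n p (MvPolynomial (Fin n) R) := by
  let Cm : MvPolynomial (Fin n) R →ₐ[R] MvPolynomial (Fin n) (MvPolynomial (Fin n) R) :=
    IsScalarTower.toAlgHom R _ _
  let π := Ideal.Quotient.mkₐ R (LL n p (MvPolynomial (Fin n) R))
  have h : SS n p R ≤ AlgHom.equalizer (π.comp (Th n R)) (π.comp Cm) := by
    unfold SS
    rw [Algebra.adjoin_le_iff]
    rintro _ ⟨i, rfl⟩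
    change π (Th n R (X i ^ p)) = π (C (X i ^ p))
    refine (Ideal.Quotient.mk_eq_mk_iff_sub_mem _ _).2 ?_
    rw [map_pow, Th_X, add_pow_char, map_pow, add_sub_cancel_left]
    exact Ideal.subset_span ⟨i, rfl⟩
  exact (Ideal.Quotient.mk_eq_mk_iff_sub_mem _ _).1 (h hm)

lemma exists_repr (hp : 0 < p) (f : MvPolynomial (Fin n) R) :
    ∃ m : (Fin n → Fin p) → SS n p R,
      f = ∑ b, (m b : MvPolynomial (Fin n) R) * ∏ i, X i ^ (b i : ℕ) := by
  classical
  induction f using MvPolynomial.induction_on' with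
  | add f g hf hg =>
    obtain ⟨u, hu⟩ := hf
    obtain ⟨v, hv⟩ := hg
    refine ⟨u + v, ?_⟩
    simp only [Pi.add_apply, Subalgebra.coe_add, add_mul, Finset.sum_add_distrib, ← hu, ← hv]
  | monomial d r =>
    have hmem : C r * ∏ i, (X i ^ p) ^ (d i / p) ∈ SS n p R := by
      refine mul_mem (Subalgebra.algebraMap_mem _ r) (prod_mem fun i _ => pow_mem ?_ _)
      exact Algebra.subset_adjoin ⟨i, rfl⟩
    refine ⟨Pi.single (fun i => ⟨d i % p, Nat.mod_lt _ hp⟩) ⟨_, hmem⟩, ?_⟩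
    rw [Finset.sum_eq_single (fun i => ⟨d i % p, Nat.mod_lt _ hp⟩)]
    · simp only [Pi.single_eq_same]
      rw [monomial_eq, Finsupp.prod_fintype _ _ (by simp), mul_assoc, ← Finset.prod_mul_distrib]
      congr 1
      apply Finset.prod_congr rfl
      intro i _
      rw [← pow_mul, ← pow_add, Nat.div_add_mod]
    · intro b _ hb
      rw [Pi.single_eq_of_ne hb]; simp
    · simp

end JacPf

open JacPf in
theorem stmt11 {k : Type*} [Field k] (p : ℕ) (hp : p.Prime) [CharP k p] (n : ℕ)
    (F : Fin n → MvPolynomial (Fin n) k) (g : MvPolynomial (Fin n) k) :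
    g * jac F ^ (p ^ n * (p - 1) / 2) ∈
      Algebra.adjoin k
        ((Set.range fun i : Fin n => (X i : MvPolynomial (Fin n) k) ^ p) ∪ Set.range F) := by
  classical
  have : Fact p.Prime := ⟨hp⟩
  by_cases hj : jac F = 0
  · have hn : n ≠ 0 := by
      rintro rfl
      simp [jac] at hj
    have hq : p ^ n * (p - 1) / 2 ≠ 0 := by
      have h1 : p ≤ p ^ n := Nat.le_self_pow hn p
      have h2 := hp.two_le
      have h3 : p ^ n * 1 ≤ p ^ n * (p - 1) := Nat.mul_le_mul_left _ (by omega)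
      omega
    rw [hj, zero_pow hq, mul_zero]
    exact zero_mem _
  set T := Algebra.adjoin k
        ((Set.range fun i : Fin n => (X i : MvPolynomial (Fin n) k) ^ p) ∪ Set.range F) with hT
  have hST : SS n p k ≤ T := Algebra.adjoin_mono Set.subset_union_left
  choose M hM using fun a : Fin n → Fin p => exists_repr (p := p) hp.pos (∏ i, F i ^ (a i : ℕ))
  let M' : Matrix (Fin n → Fin p) (Fin n → Fin p) (SS n p k) := Matrix.of M
  let MB : Matrix (Fin n → Fin p) (Fin n → Fin p) (MvPolynomial (Fin n) k) :=
    (SS n p k).val.toRingHom.mapMatrix M'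
  have hMB : ∀ a b, MB a b = (M a b : MvPolynomial (Fin n) k) := fun a b => rfl
  -- Taylor expansion
  have h1 : (NN (fun i => Th n k (F i)) : Matrix (Fin n → Fin p) (Fin n → Fin p) _) =
      MB * NN (fun i => C (X i) + X i) := by
    ext1 a c
    rw [Matrix.mul_apply]
    simp only [NN, Matrix.of_apply, hMB]
    have : ∏ i, Th n k (F i) ^ (a i : ℕ) = Th n k (∏ i, F i ^ (a i : ℕ)) := by
      rw [map_prod]; simp
    rw [this, hM a, map_sum, coeff_sum]
    apply Finset.sum_congr rfl
    intro b _
    rw [← coeff_C_mul, ← sub_eq_zero, ← coeff_sub]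
    apply coeff_LL
    rw [map_mul, map_prod]
    simp only [map_pow, Th_X]
    rw [← sub_mul]
    exact Ideal.mul_mem_right _ _ (Th_SS _ (M a b).2)
  let P : Fin n → MvPolynomial (Fin n) (MvPolynomial (Fin n) k) := fun i => Th n k (F i) - C (F i)
  have hP0 : ∀ i, coeff 0 (P i) = 0 := by
    intro i
    change coeff 0 (Th n k (F i) - C (F i)) = 0
    rw [coeff_sub, Th_coeff0, coeff_C, if_pos rfl, sub_self]
  have hPJ : (Matrix.of fun i j => coeff (Finsupp.single j 1) (P i)).det = jac F := by
    unfold jac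
    congr 1
    ext1 i j
    change coeff (Finsupp.single j 1) (Th n k (F i) - C (F i)) = pderiv j (F i)
    rw [coeff_sub, Th_coeff1, coeff_C, if_neg, sub_zero]
    intro h
    simpa using DFunLike.congr_fun h j
  have h2 : (NN (fun i => Th n k (F i)) : Matrix (Fin n → Fin p) (Fin n → Fin p) _) =
      NN (fun i => C (F i) + X i) * NN P := by
    have hF : (fun i => Th n k (F i)) = fun i => bind₁ P (C (F i) + X i) := by
      funext i
      rw [map_add, bind₁_C_right, bind₁_X_right]
      exact (add_sub_cancel _ _).symm
    rw [hF]
    exact NN_comp (fun i => C (F i) + X i) P hP0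
  have hdet : MB.det = jac F ^ (p ^ n * (p - 1) / 2) := by
    have h3 := congrArg Matrix.det (h1.symm.trans h2)
    rw [Matrix.det_mul, Matrix.det_mul, det_NN_shift, det_NN_shift, mul_one, one_mul,
      det_NN_dom P hP0 (by rw [hPJ]; exact hj), hPJ] at h3
    exact h3
  have hX : ∀ b : Fin n → Fin p, MB.det * ∏ i, X i ^ (b i : ℕ) ∈ T := by
    intro b
    have hv : MB.mulVec (fun b => ∏ i, X i ^ (b i : ℕ)) = fun a => ∏ i, F i ^ (a i : ℕ) := by
      funext a
      rw [hM a]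
      rfl
    have h4 := congrArg (fun v => (MB.adjugate.mulVec v) b) hv
    simp only [Matrix.mulVec_mulVec, Matrix.adjugate_mul, Matrix.smul_mulVec,
      Matrix.one_mulVec, Pi.smul_apply, smul_eq_mul] at h4
    rw [h4]
    refine sum_mem fun a _ => mul_mem (hST ?_) (prod_mem fun i _ => pow_mem ?_ _)
    · have : MB.adjugate = (SS n p k).val.toRingHom.mapMatrix M'.adjugate :=
        (RingHom.map_adjugate _ _).symm
      rw [this]
      exact (M'.adjugate b a).2
    · exact Algebra.subset_adjoin (Or.inr ⟨i, rfl⟩)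
  obtain ⟨m, hm⟩ := exists_repr (p := p) hp.pos g
  rw [← hdet, hm, Finset.sum_mul]
  refine sum_mem fun b _ => ?_
  rw [mul_assoc, mul_comm (∏ i, _)]
  exact mul_mem (hST (m b).2) (hX b)
end
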